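/- arXiv:2001.02425 — 2 statements merged into one kernel-verified Lean document; each statement's English description precedes it below -/
import Mathlib

section
/- For all real parameters p, q and all finite words u, v with entries in {0,1}: w_{p,q}(u ++ (1,0) ++ v) − w_{p,q}(u ++ (0,1) ++ v) = (p − q) · w_{p,q}(u ++ (1) ++ v), where ++ denotes concatenation of words. -/
open Finset

/-- The stationary weight of a word `a` with entries in `{0,1}` (encoded as `Fin 2`):
the product over positions `i` with `a i = 0` of `1 + p·m_i(a) + q·n_i(a)`,
where `m_i(a)` (resp. `n_i(a)`) is the number of `1`'s strictly before (resp. after) `i`. -/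
noncomputable def wt (p q : ℝ) {m : ℕ} (a : Fin m → Fin 2) : ℝ :=
  ∏ i ∈ univ.filter (fun i => a i = 0),
    (1 + p * ((univ.filter (fun j => j < i ∧ a j = 1)).card : ℝ)
       + q * ((univ.filter (fun j => i < j ∧ a j = 1)).card : ℝ))

/-- The number of `1`'s in the word `a`. -/
def ones {m : ℕ} (a : Fin m → Fin 2) : ℕ := (univ.filter (fun i => a i = 1)).card

/-- The restricted partition function `R(L, n; p, q)`: the sum of the weights `wt p q a`
over all words `a` of length `L - 1` with entries in `{0,1}` having exactly `n` ones. -/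
noncomputable def R (L n : ℕ) (p q : ℝ) : ℝ :=
  ∑ a ∈ univ.filter (fun a : Fin (L - 1) → Fin 2 => ones a = n), wt p q a

/-!
Cut a word into consecutive factors. A zero sees the other factors only through the number of ones
they contain, so the weight is the product of the weights of the factors, each taken with the ones
of its surroundings added to its counts. The words `u ++ 10 ++ v`, `u ++ 01 ++ v` and `u ++ 1 ++ v`
agree in the number of ones of each of their three factors, hence give `u` and `v` the same weights,
and they differ only in the middle one. There, with `b` ones to the left and `c` to the right, `10`
and `01` have weights `1 + p (b + 1) + q c` and `1 + p b + q (c + 1)`, whose difference is `p - q`,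
and `1` has weight `1`.
-/

section OnesCounts

variable {m n : ℕ}

/-- The number `m_i(a)` of ones of the word `a` strictly before position `i`. -/
def onesBefore (a : Fin m → Fin 2) (i : Fin m) : ℕ := #{j | j < i ∧ a j = 1}

/-- The number `n_i(a)` of ones of the word `a` strictly after position `i`. -/
def onesAfter (a : Fin m → Fin 2) (i : Fin m) : ℕ := #{j | i < j ∧ a j = 1}

theorem card_filter_fin_add (P : Fin (m + n) → Prop) [DecidablePred P] :
    #{i | P i} = #{i | P (Fin.castAdd n i)} + #{j | P (Fin.natAdd m j)} := by
  simp only [card_filter, Fin.sum_univ_add]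

theorem castAdd_lt_natAdd (i : Fin m) (j : Fin n) : Fin.castAdd n i < Fin.natAdd m j := by
  simp only [Fin.lt_def, Fin.val_castAdd, Fin.val_natAdd]
  lia

theorem ones_append (x : Fin m → Fin 2) (y : Fin n → Fin 2) :
    ones (Fin.append x y) = ones x + ones y := by
  simp only [ones, card_filter_fin_add, Fin.append_left, Fin.append_right]

theorem onesBefore_append_castAdd (x : Fin m → Fin 2) (y : Fin n → Fin 2) (i : Fin m) :
    onesBefore (Fin.append x y) (Fin.castAdd n i) = onesBefore x i := by
  simp [onesBefore, card_filter_fin_add, (castAdd_lt_natAdd _ _).not_gt,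
    (Fin.strictMono_castAdd n).lt_iff_lt]

theorem onesBefore_append_natAdd (x : Fin m → Fin 2) (y : Fin n → Fin 2) (j : Fin n) :
    onesBefore (Fin.append x y) (Fin.natAdd m j) = ones x + onesBefore y j := by
  simp [onesBefore, ones, card_filter_fin_add, castAdd_lt_natAdd]

theorem onesAfter_append_castAdd (x : Fin m → Fin 2) (y : Fin n → Fin 2) (i : Fin m) :
    onesAfter (Fin.append x y) (Fin.castAdd n i) = onesAfter x i + ones y := by
  simp [onesAfter, ones, card_filter_fin_add, castAdd_lt_natAdd,
    (Fin.strictMono_castAdd n).lt_iff_lt]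

theorem onesAfter_append_natAdd (x : Fin m → Fin 2) (y : Fin n → Fin 2) (j : Fin n) :
    onesAfter (Fin.append x y) (Fin.natAdd m j) = onesAfter y j := by
  simp [onesAfter, card_filter_fin_add, (castAdd_lt_natAdd _ _).not_gt]

end OnesCounts

section FactorWeight

/-- The weight of `a` as a factor of a longer word with `b` ones to the left of `a` and `c` ones to
its right; unlike `wt` it is multiplicative under concatenation. The numbers `b` and `c` are
allowed to be arbitrary scalars. -/
def factorWt {K : Type*} [CommSemiring K] (p q b c : K) {m : ℕ} (a : Fin m → Fin 2) : K :=
  ∏ i with a i = 0, (1 + p * (b + onesBefore a i) + q * (onesAfter a i + c))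

theorem wt_eq_factorWt (p q : ℝ) {m : ℕ} (a : Fin m → Fin 2) : wt p q a = factorWt p q 0 0 a := by
  simp only [wt, factorWt, onesBefore, onesAfter, zero_add, add_zero]

variable {K : Type*}

theorem factorWt_append [CommSemiring K] (p q b c : K) {m n : ℕ}
    (x : Fin m → Fin 2) (y : Fin n → Fin 2) :
    factorWt p q b c (Fin.append x y)
      = factorWt p q b (ones y + c) x * factorWt p q (b + ones x) c y := by
  simp only [factorWt, prod_filter, Fin.prod_univ_add, Fin.append_left, Fin.append_right,
    onesBefore_append_castAdd, onesBefore_append_natAdd, onesAfter_append_castAdd,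
    onesAfter_append_natAdd, Nat.cast_add, add_assoc]

theorem factorWt_one [CommSemiring K] (p q b c : K) : factorWt p q b c ![1] = 1 := by
  simp [factorWt]

theorem factorWt_one_zero [CommSemiring K] (p q b c : K) :
    factorWt p q b c ![1, 0] = 1 + p * (b + 1) + q * c := by
  have before : onesBefore ![1, 0] 1 = 1 := by decide
  have after : onesAfter ![1, 0] 1 = 0 := by decide
  simp [factorWt, prod_filter, before, after]

theorem factorWt_zero_one [CommSemiring K] (p q b c : K) :
    factorWt p q b c ![0, 1] = 1 + p * b + q * (1 + c) := by
  have before : onesBefore ![0, 1] 0 = 0 := by decide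
  have after : onesAfter ![0, 1] 0 = 1 := by decide
  simp [factorWt, prod_filter, before, after]

theorem factorWt_one_zero_sub_zero_one [CommRing K] (p q b c : K) :
    factorWt p q b c ![1, 0] - factorWt p q b c ![0, 1] = p - q := by
  rw [factorWt_one_zero, factorWt_zero_one]
  ring

theorem wt_exchange_general [CommRing K] (p q b c : K) {m n : ℕ}
    (u : Fin m → Fin 2) (v : Fin n → Fin 2) :
    factorWt p q b c (Fin.append (Fin.append u ![1, 0]) v)
      - factorWt p q b c (Fin.append (Fin.append u ![0, 1]) v)
      = (p - q) * factorWt p q b c (Fin.append (Fin.append u ![1]) v) := by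
  have ones_one_zero : ones ![1, 0] = 1 := by decide
  have ones_zero_one : ones ![0, 1] = 1 := by decide
  have ones_one : ones ![1] = 1 := by decide
  simp only [factorWt_append, ones_append, ones_one_zero, ones_zero_one, ones_one, factorWt_one]
  rw [← factorWt_one_zero_sub_zero_one p q (b + ones u) (ones v + c)]
  ring

end FactorWeight

/-- the key weight identity
`w(u ++ 10 ++ v) - w(u ++ 01 ++ v) = (p - q) · w(u ++ 1 ++ v)`. -/
theorem wt_exchange (p q : ℝ) {mu mv : ℕ} (u : Fin mu → Fin 2) (v : Fin mv → Fin 2) :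
    wt p q (Fin.append (Fin.append u ![1, 0]) v)
      - wt p q (Fin.append (Fin.append u ![0, 1]) v)
      = (p - q) * wt p q (Fin.append (Fin.append u ![1]) v) := by
  simp only [wt_eq_factorWt]
  exact wt_exchange_general p q 0 0 u v
end

section
/- Let L ≥ 3 and 1 ≤ n ≤ L−2 be integers, let p, q be real parameters, and fix a position k with 1 ≤ k ≤ L−2. Then ∑_{a : a_k = 1, a_{k+1} = 0} w_{p,q}(a) − ∑_{a : a_k = 0, a_{k+1} = 1} w_{p,q}(a) = (p − q) · ∑_{b : b_k = 1} w_{p,q}(b), where the first two sums run over words a of length L−1 with entries in {0,1} having exactly n ones and the prescribed values at positions k and k+1, and the last sum runs over words b of length L−2 with entries in {0,1} having exactly n ones and b_k = 1. -/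
open Finset

/-!
Deleting the `0` from an adjacent pair `10` or `01` leaves a shorter word with a `1` at the first
position of the pair, so both sums on the left run over the same words `b`. Inserting a `0` into `b`
multiplies its weight by a factor that depends only on the numbers of `1`'s on either side of the
new letter; moving that `0` from the left to the right of a single `1` raises the first number by
one, lowers the second by one, and thus changes the factor by `p - q`.
-/

theorem card_filter_le_and {α : Type*} [PartialOrder α] [Fintype α]
    [DecidableLE α] [DecidableLT α] {P : α → Prop} [DecidablePred P] {j : α} (hj : P j) :
    #{i | i ≤ j ∧ P i} = #{i | i < j ∧ P i} + 1 := by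
  classical
  have h : univ.filter (fun i => i ≤ j ∧ P i) = insert j (univ.filter fun i => i < j ∧ P i) := by
    ext i
    simp only [mem_filter_univ, mem_insert, le_iff_eq_or_lt]
    grind
  rw [h, card_insert_of_notMem (by simp)]

theorem card_filter_ge_and {α : Type*} [PartialOrder α] [Fintype α]
    [DecidableLE α] [DecidableLT α] {P : α → Prop} [DecidablePred P] {j : α} (hj : P j) :
    #{i | j ≤ i ∧ P i} = #{i | j < i ∧ P i} + 1 :=
  card_filter_le_and (P := fun i : αᵒᵈ => P (OrderDual.ofDual i)) hj

theorem sum_filter_and_apply_eq {m : ℕ} {α : Fin (m + 1) → Type*} [∀ i, Fintype (α i)]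
    {M : Type*} [AddCommMonoid M] (x : Fin (m + 1)) [DecidableEq (α x)] (c : α x)
    (P : (∀ i, α i) → Prop) [DecidablePred P] (f : (∀ i, α i) → M) :
    ∑ a with P a ∧ a x = c, f a = ∑ b with P (x.insertNth c b), f (x.insertNth c b) := by
  simp only [sum_filter]
  rw [← (Fin.insertNthEquiv α x).sum_comp, Fintype.sum_prod_type_right]
  refine Fintype.sum_congr _ _ fun b => ?_
  simp [Fin.insertNthEquiv, and_comm, ite_and]

section Words

variable {m : ℕ}

/-- The word obtained from `b` by inserting a `0` so that it occupies position `x`. -/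
abbrev insertZero (x : Fin (m + 1)) (b : Fin m → Fin 2) : Fin (m + 1) → Fin 2 :=
  x.insertNth (α := fun _ => Fin 2) 0 b

/-- The factor `1 + p·m_x + q·n_x` contributed to the weight by a `0` inserted into `b` at
position `x`. The letters of `b` that end up before it are those at `i` with `i.castSucc < x`. -/
noncomputable def insertionFactor (p q : ℝ) (b : Fin m → Fin 2) (x : Fin (m + 1)) : ℝ :=
  1 + p * #{i : Fin m | i.castSucc < x ∧ b i = 1} + q * #{i : Fin m | x ≤ i.castSucc ∧ b i = 1}

theorem insertionFactor_succ_sub_castSucc (p q : ℝ) {b : Fin m → Fin 2} {i : Fin m}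
    (hb : b i = 1) :
    insertionFactor p q b i.succ - insertionFactor p q b i.castSucc = p - q := by
  simp only [insertionFactor, Fin.castSucc_lt_succ_iff, Fin.succ_le_castSucc_iff,
    Fin.castSucc_lt_castSucc_iff, Fin.castSucc_le_castSucc_iff,
    card_filter_le_and (P := (b · = 1)) hb, card_filter_ge_and (P := (b · = 1)) hb]
  push_cast
  ring

theorem insertZero_succ_apply_castSucc (i : Fin m) (b : Fin m → Fin 2) :
    insertZero i.succ b i.castSucc = b i := by
  simpa using Fin.insertNth_apply_succAbove (α := fun _ => Fin 2) i.succ 0 b i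

theorem insertZero_castSucc_apply_succ (i : Fin m) (b : Fin m → Fin 2) :
    insertZero i.castSucc b i.succ = b i := by
  simpa using Fin.insertNth_apply_succAbove (α := fun _ => Fin 2) i.castSucc 0 b i

theorem card_filter_insertZero (x : Fin (m + 1)) (b : Fin m → Fin 2)
    (P : Fin (m + 1) → Prop) [DecidablePred P] :
    #{j | P j ∧ insertZero x b j = 1} = #{i | P (x.succAbove i) ∧ b i = 1} := by
  simp only [card_filter, Fin.sum_univ_succAbove _ x]
  simp

theorem ones_insertZero (x : Fin (m + 1)) (b : Fin m → Fin 2) :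
    ones (insertZero x b) = ones b := by
  simpa [ones] using card_filter_insertZero x b (fun _ => True)

theorem wt_insertZero (p q : ℝ) (x : Fin (m + 1)) (b : Fin m → Fin 2) :
    wt p q (insertZero x b) = insertionFactor p q b x * wt p q b := by
  simp only [wt, insertionFactor, card_filter_insertZero, prod_filter,
    Fin.prod_univ_succAbove _ x]
  simp [Fin.succAbove_lt_succAbove_iff, Fin.succAbove_lt_iff_castSucc_lt,
    Fin.lt_succAbove_iff_le_castSucc]

theorem wt_insertZero_succ_sub_castSucc (p q : ℝ) {b : Fin m → Fin 2} {i : Fin m}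
    (hb : b i = 1) :
    wt p q (insertZero i.succ b) - wt p q (insertZero i.castSucc b) = (p - q) * wt p q b := by
  rw [wt_insertZero, wt_insertZero, ← sub_mul, insertionFactor_succ_sub_castSucc p q hb]

variable {M : Type*} [AddCommMonoid M]

theorem sum_filter_one_zero (n : ℕ) (i : Fin m) (f : (Fin (m + 1) → Fin 2) → M) :
    ∑ a with ones a = n ∧ a i.castSucc = 1 ∧ a i.succ = 0, f a =
      ∑ b with ones b = n ∧ b i = 1, f (insertZero i.succ b) := by
  simpa only [and_assoc, ones_insertZero, insertZero_succ_apply_castSucc] using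
    sum_filter_and_apply_eq i.succ 0 (fun a => ones a = n ∧ a i.castSucc = 1) f

theorem sum_filter_zero_one (n : ℕ) (i : Fin m) (f : (Fin (m + 1) → Fin 2) → M) :
    ∑ a with ones a = n ∧ a i.castSucc = 0 ∧ a i.succ = 1, f a =
      ∑ b with ones b = n ∧ b i = 1, f (insertZero i.castSucc b) := by
  simpa only [and_assoc, and_comm (a := _ = (1 : Fin 2)), ones_insertZero,
    insertZero_castSucc_apply_succ] using
    sum_filter_and_apply_eq i.castSucc 0 (fun a => ones a = n ∧ a i.succ = 1) f

end Words

/-- the correlation identity at a fixed pair of neighbouring positions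
`k, k+1` (positions `1, …, L-1` of the word correspond to indices `0, …, L-2`). -/
theorem current_correlation (L n k : ℕ) (hL : 3 ≤ L) (hn1 : 1 ≤ n) (hn2 : n ≤ L - 2)
    (hk1 : 1 ≤ k) (hk2 : k ≤ L - 2) (p q : ℝ) :
    (∑ a ∈ univ.filter (fun a : Fin (L - 1) → Fin 2 =>
        ones a = n ∧ a ⟨k - 1, by omega⟩ = 1 ∧ a ⟨k, by omega⟩ = 0), wt p q a)
    - (∑ a ∈ univ.filter (fun a : Fin (L - 1) → Fin 2 =>
        ones a = n ∧ a ⟨k - 1, by omega⟩ = 0 ∧ a ⟨k, by omega⟩ = 1), wt p q a)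
    = (p - q) * ∑ b ∈ univ.filter (fun b : Fin (L - 2) → Fin 2 =>
        ones b = n ∧ b ⟨k - 1, by omega⟩ = 1), wt p q b := by
  obtain ⟨m, rfl⟩ : ∃ m, L = m + 2 := ⟨L - 2, by omega⟩
  obtain ⟨j, rfl⟩ : ∃ j, k = j + 1 := ⟨k - 1, by omega⟩
  let i : Fin m := ⟨j, by omega⟩
  calc
    _ = ∑ b with ones b = n ∧ b i = 1, wt p q (insertZero i.succ b)
        - ∑ b with ones b = n ∧ b i = 1, wt p q (insertZero i.castSucc b) :=
      congrArg₂ (· - ·) (sum_filter_one_zero n i (wt p q)) (sum_filter_zero_one n i (wt p q))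
    _ = ∑ b with ones b = n ∧ b i = 1, (p - q) * wt p q b := by
      rw [← sum_sub_distrib]
      exact sum_congr rfl fun b hb =>
        wt_insertZero_succ_sub_castSucc p q (mem_filter.mp hb).2.2
    _ = _ := (mul_sum _ _ _).symm
end
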